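/- For Lebesgue-almost every x ∈ I, the pointwise Hölder exponents of both components of Cantor's bijection satisfy h_{f_1}(x) ∈ [ log K_0 / (2 log K_1) , log K_1 / (2 log K_0) ] and h_{f_2}(x) ∈ [ log K_0 / (2 log K_1) , log K_1 / (2 log K_0) ]. -/

import Mathlib

open Filter Finset MeasureTheory

/-- `qden a n` is the denominator `q_n` of the continued fraction with partial
quotients `a_1 = a 0, a_2 = a 1, …` (0-indexed sequence `a`), defined by
`q_0 = 1`, `q_1 = a_1`, `q_n = a_n q_{n-1} + q_{n-2}`. -/
def qden (a : ℕ → ℕ+) : ℕ → ℕ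
  | 0 => 1
  | 1 => a 0
  | (n+2) => (a (n+1) : ℕ) * qden a (n+1) + qden a n

/-- `pnum a n` is the numerator `p_n`, defined by `p_0 = 0`, `p_1 = 1`,
`p_n = a_n p_{n-1} + p_{n-2}`. -/
def pnum (a : ℕ → ℕ+) : ℕ → ℕ
  | 0 => 0
  | 1 => 1
  | (n+2) => (a (n+1) : ℕ) * pnum a (n+1) + pnum a n

/-- The value `[a_1, a_2, …]` of the infinite continued fraction with partial quotients
`a_1 = a 0, a_2 = a 1, …`, i.e. the limit of the convergents `p_n / q_n` (which always
exists). -/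
noncomputable def cfVal (a : ℕ → ℕ+) : ℝ :=
  limUnder atTop (fun n => (pnum a n : ℝ) / (qden a n : ℝ))

/-- The set `I` of irrational numbers of `[0,1]`. -/
def Iirr : Set ℝ := {x | x ∈ Set.Icc (0:ℝ) 1 ∧ Irrational x}

/-- The (unique) sequence of partial quotients of `x`, when `x` has a continued
fraction expansion. -/
noncomputable def coeff (x : ℝ) : ℕ → ℕ+ := by
  classical
  exact if h : ∃ a : ℕ → ℕ+, cfVal a = x then h.choose else fun _ => 1

/-- First component of Cantor's bijection: `f₁([a_1,a_2,…]) = [a_1,a_3,a_5,…]`. -/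
noncomputable def cantorF1 (x : ℝ) : ℝ := cfVal (fun j => coeff x (2*j))

/-- Second component of Cantor's bijection: `f₂([a_1,a_2,…]) = [a_2,a_4,a_6,…]`. -/
noncomputable def cantorF2 (x : ℝ) : ℝ := cfVal (fun j => coeff x (2*j+1))

/-- `g ∈ Λ^α(x)`, where `g` is viewed as a function on the set `A`. -/
def memHolder (g : ℝ → ℝ) (A : Set ℝ) (x : ℝ) (α : ℝ) : Prop :=
  ∃ C > 0, ∀ y ∈ A, |g x - g y| ≤ C * |x - y| ^ α

/-- The pointwise Hölder exponent `h_g(x)` of `g : A → ℝ` at `x`. -/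
noncomputable def holderExp (g : ℝ → ℝ) (A : Set ℝ) (x : ℝ) : ℝ :=
  sSup {α : ℝ | α ∈ Set.Icc (0:ℝ) 1 ∧ memHolder g A x α}

/-- The Khintchine-type constant `K_k = ∏_{j=1}^∞ (1 + 1/(j(j+2)))^{log(j+k)/log 2}`. -/
noncomputable def Kconst (k : ℕ) : ℝ :=
  ∏' j : ℕ, (1 + 1 / (((j:ℝ)+1) * ((j:ℝ)+3))) ^ (Real.log ((j:ℝ)+1+(k:ℝ)) / Real.log 2)

lemma qden_pos (a : ℕ → ℕ+) : ∀ n, 0 < qden a n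
  | 0 => by simp [qden]
  | 1 => by simp [qden]
  | (n+2) => by
    have := qden_pos a n
    simp only [qden]; omega

lemma qden_le_succ (a : ℕ → ℕ+) : ∀ n, qden a n ≤ qden a (n+1)
  | 0 => by have := (a 0).pos; simp [qden]; exact this
  | (n+1) => by
    have h : 1 ≤ (a (n+1) : ℕ) := (a (n+1)).pos
    simp only [qden]
    nlinarith [qden_pos a (n+1)]

lemma le_qden (a : ℕ → ℕ+) : ∀ n, n ≤ qden a n
  | 0 => by simp
  | 1 => by have := (a 0).pos; simp [qden]; exact this
  | (n+2) => by
    have h : 1 ≤ (a (n+1) : ℕ) := (a (n+1)).pos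
    have := le_qden a (n+1)
    have := qden_pos a n
    simp only [qden]
    nlinarith

lemma pnum_le_qden (a : ℕ → ℕ+) : ∀ n, pnum a n ≤ qden a n
  | 0 => by simp [qden, pnum]
  | 1 => by have := (a 0).pos; simp [qden, pnum]; exact this
  | (n+2) => by
    have := pnum_le_qden a (n+1)
    have := pnum_le_qden a n
    simp only [qden, pnum]
    gcongr

lemma cf_det (a : ℕ → ℕ+) : ∀ n,
    (pnum a (n+1) : ℝ) * qden a n - pnum a n * qden a (n+1) = (-1)^n
  | 0 => by simp [qden, pnum]
  | (n+1) => by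
    have := cf_det a n
    simp only [qden, pnum, pow_succ] at *
    push_cast
    linarith

lemma prod_le_qden (a : ℕ → ℕ+) : ∀ n, ∏ i ∈ range n, (a i : ℕ) ≤ qden a n
  | 0 => by simp [qden]
  | 1 => by simp [qden]
  | (n+2) => by
    have := prod_le_qden a (n+1)
    rw [prod_range_succ]
    simp only [qden]
    nlinarith [(a (n+1)).pos]

lemma qden_le_prod (a : ℕ → ℕ+) : ∀ n, qden a n ≤ ∏ i ∈ range n, ((a i : ℕ) + 1)
  | 0 => by simp [qden]
  | 1 => by simp [qden]
  | (n+2) => by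
    have := qden_le_prod a (n+1)
    have h2 := qden_le_succ a n
    rw [prod_range_succ]
    simp only [qden]
    nlinarith [(a (n+1)).pos]

lemma shift_pq (a : ℕ → ℕ+) : ∀ n,
    pnum a (n+1) = qden (fun j => a (j+1)) n ∧
    qden a (n+1) = a 0 * qden (fun j => a (j+1)) n + pnum (fun j => a (j+1)) n
  | 0 => by simp [qden, pnum]
  | 1 => by simp [qden, pnum]; ring
  | (n+2) => by
    obtain ⟨h1, h2⟩ := shift_pq a (n+1)
    obtain ⟨h3, h4⟩ := shift_pq a n
    constructor
    · rw [pnum, h1, h3]; rfl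
    · rw [qden, h2, h4]; simp only [qden, pnum]; ring

lemma two_pow_le (a : ℕ → ℕ+) : ∀ n, 2^n ≤ qden a n * qden a (n+1)
  | 0 => by have := (a 0).pos; simp [qden]; exact this
  | (n+1) => by
    have := two_pow_le a n
    have h : 1 ≤ (a (n+1) : ℕ) := (a (n+1)).pos
    have h2 := qden_le_succ a n
    have h3 : 2 * qden a n ≤ qden a (n+2) := by
      simp only [qden]; nlinarith [qden_pos a (n+1)]
    rw [pow_succ]
    nlinarith [qden_pos a (n+1)]

lemma cfVal_tendsto (a : ℕ → ℕ+) :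
    Tendsto (fun n => (pnum a n : ℝ) / (qden a n : ℝ)) atTop (nhds (cfVal a)) := by
  apply CauchySeq.tendsto_limUnder
  apply cauchySeq_of_le_geometric (1/2) 1 (by norm_num)
  intro n
  have h1 : (0:ℝ) < qden a n := by exact_mod_cast qden_pos a n
  have h2 : (0:ℝ) < qden a (n+1) := by exact_mod_cast qden_pos a (n+1)
  have h3 : (2:ℝ)^n ≤ qden a n * qden a (n+1) := by exact_mod_cast two_pow_le a n
  have hd := cf_det a n
  rw [dist_comm, Real.dist_eq, div_sub_div _ _ h2.ne' h1.ne']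
  rw [show (pnum a (n+1) : ℝ) * qden a n - qden a (n+1) * pnum a n = (-1)^n by linarith]
  rw [abs_div, abs_pow, abs_neg, abs_one, one_pow, abs_of_pos (mul_pos h2 h1), one_mul, one_div_pow]
  apply one_div_le_one_div_of_le (by positivity)
  linarith

lemma cfVal_mem_Icc (a : ℕ → ℕ+) : cfVal a ∈ Set.Icc (0:ℝ) 1 := by
  apply isClosed_Icc.mem_of_tendsto (cfVal_tendsto a)
  filter_upwards with n
  have h1 : (0:ℝ) < qden a n := by exact_mod_cast qden_pos a n
  have h2 : (pnum a n:ℝ) ≤ qden a n := by exact_mod_cast pnum_le_qden a n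
  exact ⟨by positivity, by rw [div_le_one h1]; exact h2⟩

lemma cfVal_rec (a : ℕ → ℕ+) : cfVal a = 1 / (a 0 + cfVal (fun j => a (j+1))) := by
  have h := (cfVal_tendsto a).comp (tendsto_add_atTop_nat 1)
  refine tendsto_nhds_unique h ?_
  have h0 := cfVal_mem_Icc (fun j => a (j+1))
  have h1 : (1:ℝ) ≤ a 0 := by exact_mod_cast (a 0).pos
  have := (tendsto_const_nhds (x := (1:ℝ))).div
    ((cfVal_tendsto (fun j => a (j+1))).const_add (a 0 : ℝ)) (by linarith [h0.1])
  refine this.congr fun n => ?_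
  obtain ⟨h3, h4⟩ := shift_pq a n
  have h5 : (0:ℝ) < qden (fun j => a (j+1)) n := by exact_mod_cast qden_pos _ n
  simp only [Function.comp, h3, h4, Pi.div_apply]
  push_cast
  field_simp

lemma cfVal_pos (a : ℕ → ℕ+) : 0 < cfVal a := by
  rw [cfVal_rec]
  have h0 := cfVal_mem_Icc (fun j => a (j+1))
  have h1 : (1:ℝ) ≤ a 0 := by exact_mod_cast (a 0).pos
  have := h0.1
  positivity

lemma cfVal_lt_one (a : ℕ → ℕ+) : cfVal a < 1 := by
  rw [cfVal_rec]
  have h0 := cfVal_pos (fun j => a (j+1))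
  have h1 : (1:ℝ) ≤ a 0 := by exact_mod_cast (a 0).pos
  rw [div_lt_one (by linarith)]
  linarith

lemma cfVal_ge (a : ℕ → ℕ+) : 1 / ((a 0 : ℝ) + 1) ≤ cfVal a := by
  rw [cfVal_rec a]
  have h0 := cfVal_pos (fun j => a (j+1))
  have h2 := cfVal_lt_one (fun j => a (j+1))
  have h1 : (1:ℝ) ≤ a 0 := by exact_mod_cast (a 0).pos
  apply one_div_le_one_div_of_le <;> linarith

lemma cfVal_irr_aux : ∀ (N s : ℕ), s ≤ N → ∀ (a : ℕ → ℕ+) (r : ℤ), 0 < s →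
    cfVal a * s = r → False := by
  intro N
  induction N with
  | zero => intro s hs a r h; omega
  | succ N ih =>
    intro s hs a r hs0 h
    have h0 := cfVal_pos a
    have h1 := cfVal_lt_one a
    have hsr : (0:ℝ) < s := by exact_mod_cast hs0
    have hr0 : (0:ℤ) < r := by
      have : (0:ℝ) < r := by rw [← h]; positivity
      exact_mod_cast this
    have hr1 : r < s := by
      have : (r:ℝ) < s := by rw [← h]; nlinarith
      exact_mod_cast this
    lift r to ℕ using hr0.le
    have ha : (1:ℝ) ≤ a 0 := by exact_mod_cast (a 0).pos
    have ht := cfVal_pos (fun j => a (j+1))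
    refine ih r (by omega) (fun j => a (j+1)) (s - (a 0 : ℕ) * r) (by omega) ?_
    have hrec := cfVal_rec a
    rw [eq_div_iff (by linarith)] at hrec
    push_cast at *
    linear_combination (s:ℝ) * hrec - h * (a 0 + cfVal (fun j => a (j+1)))

lemma cfVal_mem (a : ℕ → ℕ+) : cfVal a ∈ Iirr := by
  refine ⟨cfVal_mem_Icc a, ?_⟩
  rintro ⟨q, hq⟩
  refine cfVal_irr_aux q.den q.den le_rfl a q.num q.den_pos ?_
  rw [← hq]
  exact_mod_cast Rat.mul_den_eq_num q

lemma cfVal_inv_floor (a : ℕ → ℕ+) : ⌊(cfVal a)⁻¹⌋₊ = (a 0 : ℕ) := by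
  rw [cfVal_rec, one_div, inv_inv, Nat.floor_eq_iff (by have := cfVal_pos (fun j => a (j+1)); positivity)]
  constructor
  · linarith [cfVal_pos (fun j => a (j+1))]
  · linarith [cfVal_lt_one (fun j => a (j+1))]

lemma cfVal_inj_aux : ∀ (n : ℕ) (a b : ℕ → ℕ+), cfVal a = cfVal b → a n = b n := by
  intro n
  induction n with
  | zero =>
    intro a b h
    have h1 := cfVal_inv_floor a
    rw [h, cfVal_inv_floor b] at h1
    exact (PNat.coe_injective h1).symm
  | succ n ih =>
    intro a b h
    have h1 := cfVal_inv_floor a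
    rw [h, cfVal_inv_floor b] at h1
    apply ih (fun j => a (j+1)) (fun j => b (j+1))
    rw [cfVal_rec a, cfVal_rec b, ← h1] at h
    have h2 := cfVal_pos (fun j => a (j+1))
    have h3 := cfVal_pos (fun j => b (j+1))
    rw [one_div, one_div, inv_inj] at h
    linarith

lemma coeff_cfVal (a : ℕ → ℕ+) : coeff (cfVal a) = a := by
  have h : ∃ b : ℕ → ℕ+, cfVal b = cfVal a := ⟨a, rfl⟩
  have : cfVal (coeff (cfVal a)) = cfVal a := by
    unfold coeff
    rw [dif_pos h]
    exact h.choose_spec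
  funext n
  exact cfVal_inj_aux n _ _ this

/-- inverse branches -/
noncomputable def phi (a : ℕ → ℕ+) : ℕ → ℝ → ℝ
  | 0, t => t
  | (n+1), t => phi a n (1 / (a n + t))

lemma phi_succ (a : ℕ → ℕ+) : ∀ (n : ℕ) (t : ℝ), 0 ≤ t →
    phi a (n+1) t = (pnum a (n+1) + t * pnum a n) / (qden a (n+1) + t * qden a n)
  | 0, t, ht => by simp [phi, pnum, qden]
  | (n+1), t, ht => by
    have ha : (1:ℝ) ≤ a (n+1) := by exact_mod_cast (a (n+1)).pos
    rw [phi, phi_succ a n _ (by positivity)]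
    have h1 : (0:ℝ) < qden a n := by exact_mod_cast qden_pos a n
    have h2 : (0:ℝ) < qden a (n+1) := by exact_mod_cast qden_pos a (n+1)
    simp only [qden, pnum]
    push_cast
    rw [div_eq_div_iff (by positivity) (by positivity)]
    field_simp
    ring

lemma phi_diff (a : ℕ → ℕ+) (n : ℕ) (s t : ℝ) (hs : 0 ≤ s) (ht : 0 ≤ t) :
    |phi a (n+1) s - phi a (n+1) t| =
      |s - t| / ((qden a (n+1) + s * qden a n) * (qden a (n+1) + t * qden a n)) := by
  have h1 : (0:ℝ) < qden a n := by exact_mod_cast qden_pos a n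
  have h2 : (0:ℝ) < qden a (n+1) := by exact_mod_cast qden_pos a (n+1)
  rw [phi_succ a n s hs, phi_succ a n t ht, div_sub_div _ _ (by positivity) (by positivity), abs_div]
  rw [abs_of_pos (a := (_ * _)) (by positivity)]
  congr 1
  have hd := cf_det a n
  rw [show ((pnum a (n+1) + s * pnum a n) * (qden a (n+1) + t * qden a n) -
    (qden a (n+1) + s * qden a n) * (pnum a (n+1) + t * pnum a n) : ℝ)
     = (-1)^n * (t - s) by rw [← hd]; ring]
  rw [abs_mul, abs_pow, abs_neg, abs_one, one_pow, one_mul, abs_sub_comm]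

lemma phi_diff_le (a : ℕ → ℕ+) (n : ℕ) (s t : ℝ) (hs : 0 ≤ s) (ht : 0 ≤ t) :
    |phi a n s - phi a n t| ≤ |s - t| / (qden a n : ℝ)^2 := by
  rcases n with _ | n
  · simp [phi, qden]
  rw [phi_diff a n s t hs ht]
  have h1 : (0:ℝ) < qden a n := by exact_mod_cast qden_pos a n
  have h2 : (0:ℝ) < qden a (n+1) := by exact_mod_cast qden_pos a (n+1)
  rw [sq]
  gcongr
  · have := mul_nonneg hs h1.le; linarith
  · have := mul_nonneg ht h1.le; linarith

lemma phi_diff_ge (a : ℕ → ℕ+) (n : ℕ) (s t : ℝ) (hs : 0 ≤ s) (ht : 0 ≤ t) (hs1 : s ≤ 1)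
    (ht1 : t ≤ 1) :
    |s - t| / (4 * (qden a n : ℝ)^2) ≤ |phi a n s - phi a n t| := by
  rcases n with _ | n
  · simp [phi, qden]; linarith [abs_nonneg (s-t)]
  rw [phi_diff a n s t hs ht]
  have h1 : (0:ℝ) < qden a n := by exact_mod_cast qden_pos a n
  have h2 : (0:ℝ) < qden a (n+1) := by exact_mod_cast qden_pos a (n+1)
  have h3 : (qden a n : ℝ) ≤ qden a (n+1) := by exact_mod_cast qden_le_succ a n
  rw [show (4 * (qden a (n+1) : ℝ)^2) = (2 * qden a (n+1)) * (2 * qden a (n+1)) by ring]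
  gcongr <;> nlinarith

lemma cfVal_eq_phi (a : ℕ → ℕ+) (n : ℕ) : cfVal a = phi a n (cfVal (fun j => a (j+n))) := by
  induction n with
  | zero => simp [phi]
  | succ n ih =>
    rw [ih, phi, cfVal_rec (fun j => a (j+n))]
    simp only [zero_add]
    congr 5
    funext j
    congr 1; ring

lemma phi_congr (a b : ℕ → ℕ+) (n : ℕ) (h : ∀ i < n, a i = b i) (t : ℝ) :
    phi a n t = phi b n t := by
  induction n generalizing t with
  | zero => rfl
  | succ n ih => rw [phi, phi, h n (by omega)]; exact ih (fun i hi => h i (by omega)) _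

lemma cfVal_close (a b : ℕ → ℕ+) (n : ℕ) (h : ∀ i < n, a i = b i) :
    |cfVal a - cfVal b| ≤ (∏ i ∈ range n, (a i : ℝ))⁻¹ ^ 2 := by
  rw [cfVal_eq_phi a n, cfVal_eq_phi b n, ← phi_congr a b n h]
  refine (phi_diff_le a n _ _ (cfVal_pos _).le (cfVal_pos _).le).trans ?_
  have h1 : (∏ i ∈ range n, (a i : ℝ)) ≤ qden a n := by exact_mod_cast prod_le_qden a n
  have h2 : (0:ℝ) < ∏ i ∈ range n, (a i : ℝ) := prod_pos fun i _ => by exact_mod_cast (a i).pos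
  have h3 : |cfVal (fun j => a (j+n)) - cfVal (fun j => b (j+n))| ≤ 1 := by
    rw [abs_le]
    constructor <;> linarith [cfVal_pos (fun j => a (j+n)), cfVal_pos (fun j => b (j+n)),
      cfVal_lt_one (fun j => a (j+n)), cfVal_lt_one (fun j => b (j+n))]
  rw [inv_pow, ← one_div]
  gcongr

lemma cfVal_sep_aux (a b : ℕ → ℕ+) (h : a 0 ≠ b 0) :
    1 / (4 * ((a 0:ℝ)+1)^2 * ((a 1:ℝ)+1) * ((a 2:ℝ)+1)) ≤ |cfVal a - cfVal b| := by
  set u := cfVal a with hu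
  set v := cfVal b with hv
  set u' := cfVal (fun j => a (j+1)) with hu'
  set v' := cfVal (fun j => b (j+1)) with hv'
  have u0 : 0 < u := cfVal_pos a
  have u1 : u < 1 := cfVal_lt_one a
  have v0 : 0 < v := cfVal_pos b
  have u'0 : 0 < u' := cfVal_pos _
  have v'0 : 0 < v' := cfVal_pos _
  have u'1 : u' < 1 := cfVal_lt_one _
  have v'1 : v' < 1 := cfVal_lt_one _
  have a0 : (1:ℝ) ≤ a 0 := by exact_mod_cast (a 0).pos
  have a1 : (1:ℝ) ≤ a 1 := by exact_mod_cast (a 1).pos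
  have a2 : (1:ℝ) ≤ a 2 := by exact_mod_cast (a 2).pos
  have b0 : (1:ℝ) ≤ b 0 := by exact_mod_cast (b 0).pos
  have eu : u = 1 / (a 0 + u') := cfVal_rec a
  have ev : v = 1 / (b 0 + v') := cfVal_rec b
  set d : ℝ := 1 / (2 * ((a 1:ℝ)+1) * ((a 2:ℝ)+1)) with hd
  have d0 : 0 < d := by positivity
  have d1 : d ≤ 1 := by
    rw [hd, div_le_one (by positivity)]; nlinarith
  have hu'lo : d ≤ u' := by
    refine le_trans ?_ (cfVal_ge _)
    rw [hd]
    apply one_div_le_one_div_of_le (by positivity)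
    simp only [zero_add]
    nlinarith
  have hu'hi : d ≤ 1 - u' := by
    have e : u' = 1 / (a 1 + cfVal (fun j => a (j+1+1))) := cfVal_rec _
    have g := cfVal_ge (fun j => a (j+1+1))
    simp only [zero_add, Nat.reduceAdd] at g
    set w := cfVal (fun j => a (j+1+1))
    have w0 : 0 < w := cfVal_pos _
    have w1 : w < 1 := cfVal_lt_one _
    have : 1 - u' = (a 1 + w - 1) / (a 1 + w) := by rw [e]; field_simp
    rw [this, hd, div_le_div_iff₀ (by positivity) (by positivity)]
    rw [div_le_iff₀ (by positivity)] at g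
    nlinarith [mul_nonneg (sub_nonneg.2 a1) w0.le, mul_nonneg (sub_nonneg.2 a1) (by linarith : (0:ℝ) ≤ a 2), mul_pos w0 (by linarith : (0:ℝ) < a 1)]
  have hD : d ≤ |(b 0 + v') - (a 0 + u')| := by
    rcases lt_or_gt_of_ne h with h | h
    · have : ((a 0 : ℕ):ℝ) + 1 ≤ (b 0 : ℕ) := by exact_mod_cast PNat.coe_lt_coe _ _ |>.2 h
      refine le_trans ?_ (le_abs_self _)
      linarith
    · have : ((b 0 : ℕ):ℝ) + 1 ≤ (a 0 : ℕ) := by exact_mod_cast PNat.coe_lt_coe _ _ |>.2 h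
      refine le_trans ?_ (neg_le_abs _)
      linarith
  have key : |u - v| = |(b 0 + v') - (a 0 + u')| / ((a 0 + u') * (b 0 + v')) := by
    rw [eu, ev, div_sub_div _ _ (by positivity) (by positivity), abs_div,
      abs_of_pos (a := (_ * _)) (by positivity)]
    congr 2; ring
  rw [key]
  set X : ℝ := a 0 + u'
  set Y : ℝ := b 0 + v'
  set D := |Y - X|
  have hY : Y ≤ X + D := by have := le_abs_self (Y - X); linarith
  have hX0 : 0 < X := by positivity
  have hX1 : X ≤ a 0 + 1 := by simp only [X]; linarith
  have hX2 : 1 ≤ X := by simp only [X]; linarith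
  calc 1 / (4 * ((a 0:ℝ)+1)^2 * ((a 1:ℝ)+1) * ((a 2:ℝ)+1)) = d / (2 * ((a 0:ℝ)+1)^2) := by
        rw [hd]; field_simp; ring
    _ ≤ d / (2 * X^2) := by gcongr
    _ ≤ d / (X * (X + d)) := by
        apply div_le_div_of_nonneg_left d0.le (by positivity); nlinarith
    _ ≤ D / (X * (X + D)) := by
        rw [div_le_div_iff₀ (by positivity) (by positivity)]
        nlinarith [mul_le_mul_of_nonneg_left hD (sq_nonneg X)]
    _ ≤ D / (X * Y) := by gcongr; 

lemma cfVal_sep (a b : ℕ → ℕ+) (n : ℕ) (h : ∀ i < n, a i = b i) (hn : a n ≠ b n) :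
    (1/16) * (∏ i ∈ range (n+3), ((a i : ℝ)+1))⁻¹ ^ 2 ≤ |cfVal a - cfVal b| := by
  rw [cfVal_eq_phi a n, cfVal_eq_phi b n, ← phi_congr a b n h]
  refine le_trans ?_ (phi_diff_ge a n _ _ (cfVal_pos _).le (cfVal_pos _).le (cfVal_lt_one _).le (cfVal_lt_one _).le)
  have h0 := cfVal_sep_aux (fun j => a (j+n)) (fun j => b (j+n)) (by simpa using hn)
  simp only [zero_add] at h0
  rw [add_comm 1 n, add_comm 2 n] at h0
  have h1 : (qden a n : ℝ) ≤ (∏ i ∈ range n, ((a i : ℝ) + 1)) := by exact_mod_cast qden_le_prod a n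
  have h2 : (0:ℝ) < qden a n := by exact_mod_cast qden_pos a n
  have a1 : (1:ℝ) ≤ a (n+1) := by exact_mod_cast (a (n+1)).pos
  have a2 : (1:ℝ) ≤ a (n+2) := by exact_mod_cast (a (n+2)).pos
  calc (1/16) * (∏ i ∈ range (n+3), ((a i : ℝ)+1))⁻¹ ^ 2 
      = 1 / (4 * ((a n:ℝ)+1)^2 * ((a (n+1):ℝ)+1)^2 * ((a (n+2):ℝ)+1)^2) / (4 * (∏ i ∈ range n, ((a i : ℝ) + 1))^2) := by
        rw [prod_range_succ, prod_range_succ, prod_range_succ]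
        have : (0:ℝ) < ∏ i ∈ range n, ((a i : ℝ) + 1) := by positivity
        field_simp
        ring
    _ ≤ 1 / (4 * ((a n:ℝ)+1)^2 * ((a (n+1):ℝ)+1) * ((a (n+2):ℝ)+1)) / (4 * (∏ i ∈ range n, ((a i : ℝ) + 1))^2) := by
        gcongr <;> nlinarith
    _ ≤ 1 / (4 * ((a n:ℝ)+1)^2 * ((a (n+1):ℝ)+1) * ((a (n+2):ℝ)+1)) / (4 * (qden a n : ℝ)^2) := by
        gcongr
    _ ≤ _ := by gcongr

/-- Gauss map -/
noncomputable def gaussT (x : ℝ) : ℝ := Int.fract (x⁻¹)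

/-- digits through the Gauss map -/
noncomputable def dig (x : ℝ) (n : ℕ) : ℕ+ := Nat.toPNat' ⌊(gaussT^[n] x)⁻¹⌋₊

lemma Iirr_pos {x : ℝ} (hx : x ∈ Iirr) : 0 < x ∧ x < 1 :=
  ⟨lt_of_le_of_ne hx.1.1 (fun h => hx.2.ne_zero h.symm), lt_of_le_of_ne hx.1.2 hx.2.ne_one⟩

lemma gaussT_mem {x : ℝ} (hx : x ∈ Iirr) : gaussT x ∈ Iirr := by
  refine ⟨⟨Int.fract_nonneg _, (Int.fract_lt_one _).le⟩, ?_⟩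
  unfold gaussT Int.fract
  exact hx.2.inv.sub_intCast _

lemma gaussT_iter_mem {x : ℝ} (hx : x ∈ Iirr) (n : ℕ) : gaussT^[n] x ∈ Iirr := by
  induction n with
  | zero => exact hx
  | succ n ih => rw [Function.iterate_succ_apply']; exact gaussT_mem ih

lemma Iirr_floor_pos {x : ℝ} (hx : x ∈ Iirr) : 0 < ⌊x⁻¹⌋₊ := by
  obtain ⟨h0, h1⟩ := Iirr_pos hx
  exact Nat.floor_pos.2 (one_le_inv_iff₀.2 ⟨h0, h1.le⟩)

lemma dig_val {x : ℝ} (hx : x ∈ Iirr) (n : ℕ) : (dig x n : ℕ) = ⌊(gaussT^[n] x)⁻¹⌋₊ :=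
  PNat.toPNat'_coe (Iirr_floor_pos (gaussT_iter_mem hx n))

lemma dig_rec {x : ℝ} (hx : x ∈ Iirr) (n : ℕ) :
    gaussT^[n] x = 1 / (dig x n + gaussT^[n+1] x) := by
  have hm := gaussT_iter_mem hx n
  obtain ⟨h0, h1⟩ := Iirr_pos hm
  rw [Function.iterate_succ_apply', dig_val hx n]
  set y := gaussT^[n] x
  have : ((⌊y⁻¹⌋₊ : ℕ) : ℝ) = ((⌊y⁻¹⌋ : ℤ) : ℝ) := natCast_floor_eq_intCast_floor (inv_pos.2 h0).le
  rw [this, gaussT, Int.floor_add_fract, one_div, inv_inv]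

lemma phi_dig {x : ℝ} (hx : x ∈ Iirr) (n : ℕ) : phi (dig x) n (gaussT^[n] x) = x := by
  induction n with
  | zero => rfl
  | succ n ih => rw [phi, ← dig_rec hx n, ih]

lemma cfVal_dig {x : ℝ} (hx : x ∈ Iirr) : cfVal (dig x) = x := by
  have key : ∀ n : ℕ, |cfVal (dig x) - x| ≤ 1 / ((n:ℝ)+1) := by
    intro n
    have e1 := cfVal_eq_phi (dig x) (n+1)
    have e2 := phi_dig hx (n+1)
    have hm := Iirr_pos (gaussT_iter_mem hx (n+1))
    have h := phi_diff_le (dig x) (n+1) _ _ (cfVal_pos (fun j => dig x (j+(n+1)))).le hm.1.le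
    rw [← e1, e2] at h
    refine h.trans ?_
    have h1 : ((n:ℝ)+1) ≤ qden (dig x) (n+1) := by exact_mod_cast le_qden (dig x) (n+1)
    apply div_le_div₀ zero_le_one
    · rw [abs_le]
      constructor <;> linarith [cfVal_pos (fun j => dig x (j+(n+1))), cfVal_lt_one (fun j => dig x (j+(n+1)))]
    · positivity
    · nlinarith [(Nat.cast_nonneg n : (0:ℝ) ≤ n)]
  have : |cfVal (dig x) - x| ≤ 0 :=
    ge_of_tendsto' tendsto_one_div_add_atTop_nhds_zero_nat key
  have := abs_nonpos_iff.1 this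
  linarith

lemma coeff_eq_dig {x : ℝ} (hx : x ∈ Iirr) : coeff x = dig x := by
  conv_lhs => rw [← cfVal_dig hx]
  exact coeff_cfVal _

lemma cfVal_coeff {x : ℝ} (hx : x ∈ Iirr) : cfVal (coeff x) = x := by
  rw [coeff_eq_dig hx, cfVal_dig hx]

lemma gaussT_phi (a : ℕ → ℕ+) (n : ℕ) (t : ℝ) (ht : t ∈ Set.Ioo (0:ℝ) 1) :
    gaussT^[n] (phi a n t) = t := by
  induction n generalizing t with
  | zero => rfl
  | succ n ih =>
    have ha : (1:ℝ) ≤ a n := by exact_mod_cast (a n).pos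
    have ht0 := ht.1
    rw [Function.iterate_succ_apply', phi, ih, gaussT, one_div, inv_inv]
    · rw [Int.fract_natCast_add]
      exact Int.fract_eq_self.2 ⟨ht.1.le, ht.2⟩
    · refine ⟨by positivity, ?_⟩
      rw [div_lt_one (by positivity)]; linarith

lemma gaussT_measurable : Measurable gaussT := measurable_inv.fract

/-- Gauss measure -/
noncomputable def gaussM : Measure ℝ :=
  (volume.restrict (Set.Ioc (0:ℝ) 1)).withDensity (fun x => ENNReal.ofReal (1 / ((1 + x) * Real.log 2)))

lemma log2_pos : 0 < Real.log 2 := Real.log_pos (by norm_num)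

lemma gaussM_Ioc (a b : ℝ) (ha : 0 ≤ a) (hab : a ≤ b) (hb : b ≤ 1) :
    gaussM (Set.Ioc a b) = ENNReal.ofReal ((Real.log (1+b) - Real.log (1+a)) / Real.log 2) := by
  have h2 := log2_pos
  rw [gaussM, withDensity_apply _ measurableSet_Ioc, Measure.restrict_restrict measurableSet_Ioc]
  rw [Set.inter_eq_left.2 (Set.Ioc_subset_Ioc ha hb)]
  have hcont : ContinuousOn (fun x : ℝ => 1 / ((1 + x) * Real.log 2)) (Set.Icc a b) := by
    apply ContinuousOn.div continuousOn_const (by fun_prop)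
    intro x hx
    have : 0 < 1 + x := by linarith [hx.1]
    positivity
  have hIntOn : IntegrableOn (fun x : ℝ => 1 / ((1 + x) * Real.log 2)) (Set.Ioc a b) :=
    (hcont.integrableOn_Icc).mono_set Set.Ioc_subset_Icc_self
  rw [← ofReal_integral_eq_lintegral_ofReal hIntOn, ← intervalIntegral.integral_of_le hab]
  · congr 1
    have : ∀ x ∈ Set.uIcc a b, HasDerivAt (fun x => Real.log (1+x) / Real.log 2)
        (1 / ((1 + x) * Real.log 2)) x := by
      intro x hx
      rw [Set.uIcc_of_le hab] at hx
      have h0 : 0 < 1 + x := by linarith [hx.1]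
      have := (((hasDerivAt_id x).const_add 1).log h0.ne').div_const (Real.log 2)
      rw [div_div] at this
      exact this
    rw [intervalIntegral.integral_eq_sub_of_hasDerivAt this]
    · ring
    · rw [intervalIntegrable_iff_integrableOn_Ioc_of_le hab]; exact hIntOn
  · filter_upwards [self_mem_ae_restrict measurableSet_Ioc] with x hx
    have : 0 < 1 + x := by linarith [hx.1]
    simp only [Pi.zero_apply]
    positivity

instance : NullSingletonClass gaussM := by unfold gaussM; infer_instance

lemma gaussM_ae : ∀ᵐ x ∂gaussM, x ∈ Set.Ioc (0:ℝ) 1 :=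
  (withDensity_absolutelyContinuous _ _).ae_le (self_mem_ae_restrict measurableSet_Ioc)

lemma gaussM_compl : gaussM (Set.Ioc (0:ℝ) 1)ᶜ = 0 := gaussM_ae

lemma gaussM_inter (s : Set ℝ) : gaussM (s ∩ Set.Ioc 0 1) = gaussM s :=
  by rw [Set.inter_comm]; exact Measure.measure_inter_eq_of_ae gaussM_ae

instance : IsProbabilityMeasure gaussM := ⟨by
  rw [← gaussM_inter, Set.univ_inter, gaussM_Ioc 0 1 le_rfl zero_le_one le_rfl]
  have h2 := log2_pos
  norm_num⟩

lemma gaussM_ae_iff {p : ℝ → Prop} : (∀ᵐ x ∂gaussM, p x) ↔ ∀ᵐ x ∂(volume.restrict (Set.Ioc (0:ℝ) 1)), p x := by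
  constructor
  · intro h
    refine (withDensity_absolutelyContinuous' (by fun_prop) ?_).ae_le h
    filter_upwards [self_mem_ae_restrict measurableSet_Ioc] with x hx
    have : 0 < 1 + x := by linarith [hx.1]
    have h2 := log2_pos
    simp only [ne_eq, ENNReal.ofReal_eq_zero, not_le]
    positivity
  · intro h
    exact (withDensity_absolutelyContinuous _ _).ae_le h

lemma gaussM_irr : ∀ᵐ x ∂gaussM, x ∈ Iirr := by
  rw [gaussM_ae_iff]
  have h1 : ∀ᵐ x : ℝ, Irrational x := by
    have : (Set.range ((↑) : ℚ → ℝ)).Countable := Set.countable_range _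
    exact measure_eq_zero_iff_ae_notMem.1 (this.measure_zero volume)
  filter_upwards [self_mem_ae_restrict measurableSet_Ioc, ae_restrict_of_ae h1] with x hx hi
  exact ⟨⟨hx.1.le, hx.2⟩, hi⟩

lemma gaussT_preimage (t : ℝ) (ht0 : 0 ≤ t) (ht1 : t < 1) :
    gaussT ⁻¹' (Set.Iic t) ∩ Set.Ioc 0 1 = ⋃ k : ℕ, Set.Icc (1 / ((k:ℝ)+1+t)) (1 / ((k:ℝ)+1)) := by
  ext x
  simp only [Set.mem_inter_iff, Set.mem_preimage, Set.mem_Iic, Set.mem_Ioc, Set.mem_iUnion, Set.mem_Icc, gaussT]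
  constructor
  · rintro ⟨h, h0, h1⟩
    have hf : 1 ≤ ⌊x⁻¹⌋₊ := Nat.floor_pos.2 (one_le_inv_iff₀.2 ⟨h0, h1⟩)
    have e : ((⌊x⁻¹⌋₊ : ℕ) : ℝ) = ((⌊x⁻¹⌋ : ℤ) : ℝ) := natCast_floor_eq_intCast_floor (inv_pos.2 h0).le
    refine ⟨⌊x⁻¹⌋₊ - 1, ?_⟩
    rw [Nat.cast_sub hf, Nat.cast_one, sub_add_cancel, e]
    have hk : (1:ℝ) ≤ (⌊x⁻¹⌋ : ℤ) := by rw [← e]; exact_mod_cast hf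
    have hle := Int.floor_le x⁻¹
    unfold Int.fract at h
    constructor
    · rw [one_div_le (by linarith) h0, one_div]; linarith
    · rw [le_one_div h0 (by linarith), one_div]; exact hle
  · rintro ⟨k, h1, h2⟩
    have hk : (0:ℝ) ≤ k := Nat.cast_nonneg k
    have h0 : 0 < x := lt_of_lt_of_le (by positivity) h1
    rw [one_div_le (by linarith) h0, one_div] at h1
    rw [le_one_div h0 (by linarith), one_div] at h2
    refine ⟨?_, h0, ?_⟩
    · have : ⌊x⁻¹⌋ = (k:ℤ) + 1 := by
        rw [Int.floor_eq_iff]; push_cast; constructor <;> linarith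
      unfold Int.fract
      rw [this]; push_cast; linarith
    · rw [← inv_inv x]; exact inv_le_one_of_one_le₀ (by linarith)

lemma gauss_disj (t : ℝ) (ht0 : 0 ≤ t) (ht1 : t < 1) :
    Pairwise (Function.onFun Disjoint fun k : ℕ => Set.Icc (1 / ((k:ℝ)+1+t)) (1 / ((k:ℝ)+1))) := by
  intro k l hkl
  have key : ∀ (k : ℕ) (x : ℝ), x ∈ Set.Icc (1 / ((k:ℝ)+1+t)) (1 / ((k:ℝ)+1)) → ⌊x⁻¹⌋ = (k:ℤ)+1 := by
    rintro k x ⟨h1, h2⟩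
    have hk : (0:ℝ) ≤ k := Nat.cast_nonneg k
    have h0 : 0 < x := lt_of_lt_of_le (by positivity) h1
    rw [one_div_le (by linarith) h0, one_div] at h1
    rw [le_one_div h0 (by linarith), one_div] at h2
    rw [Int.floor_eq_iff]; push_cast; constructor <;> linarith
  rw [Function.onFun, Set.disjoint_left]
  intro x hx hy
  have := (key k x hx).symm.trans (key l x hy)
  omega

lemma recip_aux (k : ℕ) (t : ℝ) (ht : 0 ≤ t) : 1 / ((k:ℝ)+1+t) ≤ 1 / ((k:ℝ)+1) :=
  one_div_le_one_div_of_le (by positivity) (by linarith)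

lemma gauss_hasSum (t : ℝ) (ht0 : 0 ≤ t) :
    HasSum (fun k : ℕ => (Real.log (1 + 1 / ((k:ℝ)+1)) - Real.log (1 + 1 / ((k:ℝ)+1+t))) / Real.log 2)
      ((Real.log (1+t) - Real.log (1+0)) / Real.log 2) := by
  have h2 := log2_pos
  rw [hasSum_iff_tendsto_nat_of_nonneg]
  · set h : ℕ → ℝ := fun k => - Real.log (1 + t / ((k:ℝ)+1)) / Real.log 2 with hh
    have e : ∀ k : ℕ, (Real.log (1 + 1 / ((k:ℝ)+1)) - Real.log (1 + 1 / ((k:ℝ)+1+t))) / Real.log 2 = h (k+1) - h k := by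
      intro k
      have hk : (0:ℝ) ≤ k := Nat.cast_nonneg k
      simp only [hh]
      push_cast
      rw [← sub_div]
      congr 1
      rw [show 1 + 1 / ((k:ℝ)+1) = (k+2)/(k+1) by field_simp; ring,
        show 1 + 1 / ((k:ℝ)+1+t) = (k+2+t)/(k+1+t) by field_simp; ring,
        show 1 + t / ((k:ℝ)+1+1) = (k+2+t)/(k+2) by field_simp; ring,
        show 1 + t / ((k:ℝ)+1) = (k+1+t)/(k+1) by field_simp]
      rw [Real.log_div (by positivity) (by positivity), Real.log_div (by positivity) (by positivity),
        Real.log_div (by positivity) (by positivity), Real.log_div (by positivity) (by positivity)]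
      ring
    simp only [e, sum_range_sub]
    have hl : Tendsto h atTop (nhds 0) := by
      have h3 : Tendsto (fun k : ℕ => 1 + t * (1 / ((k:ℝ)+1))) atTop (nhds (1 + t * 0)) :=
        (tendsto_one_div_add_atTop_nhds_zero_nat.const_mul t).const_add 1
      have h4 := (h3.log (by norm_num)).neg.div_const (Real.log 2)
      simp only [mul_zero, add_zero, Real.log_one, neg_zero, zero_div, mul_one_div] at h4
      exact h4
    have := hl.sub_const (h 0)
    convert this using 2
    simp [hh]; ring
  · intro k
    apply div_nonneg _ h2.le
    rw [sub_nonneg]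
    apply Real.log_le_log (by positivity)
    linarith [recip_aux k t ht0]

lemma gaussT_mp : MeasurePreserving gaussT gaussM gaussM := by
  refine ⟨gaussT_measurable, ?_⟩
  have : IsProbabilityMeasure (gaussM.map gaussT) :=
    Measure.isProbabilityMeasure_map gaussT_measurable.aemeasurable
  apply Measure.ext_of_Iic
  intro t
  rw [Measure.map_apply gaussT_measurable measurableSet_Iic]
  rcases lt_or_ge t 0 with h | h0
  · have e1 : gaussT ⁻¹' Set.Iic t = ∅ := by
      ext x
      simp only [Set.mem_preimage, Set.mem_Iic, Set.mem_empty_iff_false, iff_false, not_le]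
      exact h.trans_le (Int.fract_nonneg _)
    have e2 : Set.Iic t ∩ Set.Ioc 0 1 = ∅ := by
      ext x
      simp only [Set.mem_inter_iff, Set.mem_Iic, Set.mem_Ioc, Set.mem_empty_iff_false, iff_false]
      rintro ⟨h1, h2, h3⟩; linarith
    rw [e1, ← gaussM_inter (Set.Iic t), e2]
  rcases lt_or_ge t 1 with h1 | h1
  · rw [← gaussM_inter, gaussT_preimage t h0 h1, measure_iUnion (gauss_disj t h0 h1) (fun _ => measurableSet_Icc),
      ← gaussM_inter (Set.Iic t)]
    have : Set.Iic t ∩ Set.Ioc 0 1 = Set.Ioc 0 t := by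
      ext x; simp only [Set.mem_inter_iff, Set.mem_Iic, Set.mem_Ioc]
      constructor
      · rintro ⟨h1, h2, h3⟩; exact ⟨h2, h1⟩
      · rintro ⟨h2, h3⟩; exact ⟨h3, h2, by linarith⟩
    rw [this, gaussM_Ioc 0 t le_rfl h0 h1.le]
    have e : ∀ k : ℕ, gaussM (Set.Icc (1 / ((k:ℝ)+1+t)) (1 / ((k:ℝ)+1))) =
        ENNReal.ofReal ((Real.log (1 + 1 / ((k:ℝ)+1)) - Real.log (1 + 1 / ((k:ℝ)+1+t))) / Real.log 2) := by
      intro k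
      rw [← measure_congr (Ioc_ae_eq_Icc (μ := gaussM))]
      apply gaussM_Ioc
      · positivity
      · exact recip_aux k t h0
      · rw [div_le_one (by positivity)]; linarith [(Nat.cast_nonneg k : (0:ℝ) ≤ k)]
    have hs := gauss_hasSum t h0
    rw [← hs.tsum_eq, ENNReal.ofReal_tsum_of_nonneg _ hs.summable]
    · exact tsum_congr e
    · intro k
      have h2 := log2_pos
      apply div_nonneg _ h2.le
      rw [sub_nonneg]
      apply Real.log_le_log (by positivity)
      linarith [recip_aux k t h0]
  · have e1 : gaussT ⁻¹' Set.Iic t = Set.univ := by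
      ext x
      simp only [Set.mem_preimage, Set.mem_Iic, Set.mem_univ, iff_true]
      exact (Int.fract_lt_one _).le.trans h1
    have e2 : Set.Iic t ∩ Set.Ioc 0 1 = Set.univ ∩ Set.Ioc 0 1 := by
      ext x
      simp only [Set.mem_inter_iff, Set.mem_Iic, Set.mem_Ioc, Set.mem_univ, true_and, and_iff_right_iff_imp]
      rintro ⟨h2, h3⟩; linarith
    rw [e1, ← gaussM_inter (Set.Iic t), e2, gaussM_inter]

lemma phi_image_measure (a : ℕ → ℕ+) (n : ℕ) (A : Set ℝ) (hA : A ⊆ Set.Ioo 0 1) :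
    volume A ≤ ENNReal.ofReal (4 * (qden a n : ℝ)^2) * volume (phi a n '' A) := by
  have hlip : LipschitzOnWith (Real.toNNReal (4 * (qden a n : ℝ)^2)) (gaussT^[n]) (phi a n '' A) := by
    apply LipschitzOnWith.of_dist_le_mul
    rintro _ ⟨s, hs, rfl⟩ _ ⟨t, ht, rfl⟩
    have hs' := hA hs
    have ht' := hA ht
    rw [gaussT_phi a n s hs', gaussT_phi a n t ht', Real.dist_eq, Real.dist_eq]
    have h := phi_diff_ge a n s t hs'.1.le ht'.1.le hs'.2.le ht'.2.le
    have h2 : (0:ℝ) < qden a n := by exact_mod_cast qden_pos a n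
    rw [div_le_iff₀ (by positivity)] at h
    rw [Real.coe_toNNReal _ (by positivity)]
    linarith
  have h := hlip.hausdorffMeasure_image_le (d := 1) zero_le_one
  rw [hausdorffMeasure_real, Set.image_image] at h
  have e : (fun x => gaussT^[n] (phi a n x)) '' A = A := by
    ext y
    constructor
    · rintro ⟨x, hx, rfl⟩
      simp only [gaussT_phi a n x (hA hx)]; exact hx
    · intro hy
      exact ⟨y, hy, gaussT_phi a n y (hA hy)⟩
  rw [e, ENNReal.rpow_one] at h
  exact h

lemma qden_tendsto (a : ℕ → ℕ+) : Tendsto (fun n => 1 / (qden a (2*n) : ℝ)^2) atTop (nhdsWithin 0 (Set.Ioi 0)) := by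
  have hp : ∀ n, (0:ℝ) < qden a n := fun n => by exact_mod_cast qden_pos a n
  rw [tendsto_nhdsWithin_iff]
  constructor
  · have h1 : Tendsto (fun n => (qden a (2*n) : ℝ)) atTop atTop := by
      apply tendsto_atTop_mono (f := fun n : ℕ => (n:ℝ)) _ tendsto_natCast_atTop_atTop
      intro n
      have := le_qden a (2*n)
      exact_mod_cast (by omega : n ≤ qden a (2*n))
    have h2 := ((tendsto_pow_atTop (α := ℝ) two_ne_zero).comp h1).inv_tendsto_atTop
    refine h2.congr fun n => ?_
    simp
  · filter_upwards with n
    have := hp (2*n)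
    simp only [Set.mem_Ioi]
    positivity

lemma erg_key (A : Set ℝ) (hA : MeasurableSet A) (hinv : (gaussT^[2]) ⁻¹' A = A)
    (hpos : volume (A ∩ Set.Ioo 0 1) ≠ 0) : ∀ᵐ x ∂(volume.restrict Aᶜ), x ∉ Iirr := by
  have hinv' : ∀ n, (gaussT^[2*n]) ⁻¹' A = A := by
    intro n
    rw [Function.iterate_mul]
    induction n with
    | zero => rfl
    | succ n ih => rw [Function.iterate_succ, Set.preimage_comp, ih, hinv]
  have hfin : volume (A ∩ Set.Ioo 0 1) ≠ ⊤ :=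
    measure_ne_top_of_subset Set.inter_subset_right (by simp)
  set v := (volume (A ∩ Set.Ioo 0 1)).toReal with hv
  have v0 : 0 < v := ENNReal.toReal_pos hpos hfin
  filter_upwards [IsUnifLocDoublingMeasure.ae_tendsto_measure_inter_div (volume : Measure ℝ) Aᶜ 1] with x hx hxI
  have ht := hx (fun _ => x) (fun n => 1 / (qden (dig x) (2*n) : ℝ)^2) (qden_tendsto _)
    (by
      filter_upwards with n
      rw [one_mul]
      exact Metric.mem_closedBall_self (by positivity))
  have hle : ∀ n, volume (Aᶜ ∩ Metric.closedBall x (1 / (qden (dig x) (2*n) : ℝ)^2)) /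
      volume (Metric.closedBall x (1 / (qden (dig x) (2*n) : ℝ)^2)) ≤ ENNReal.ofReal (1 - v/8) := by
    intro n
    set a := dig x
    have hq : (0:ℝ) < qden a (2*n) := by exact_mod_cast qden_pos a (2*n)
    set q : ℝ := (qden a (2*n) : ℝ) with hqd
    set A' := A ∩ Set.Ioo 0 1
    set Bl := Metric.closedBall x (1 / q^2)
    have hsub : phi a (2*n) '' A' ⊆ A ∩ Bl := by
      rintro _ ⟨t, ht, rfl⟩
      constructor
      · rw [← hinv' n, Set.mem_preimage, gaussT_phi a _ t ht.2]; exact ht.1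
      · have e2 := phi_dig hxI (2*n)
        have hm := Iirr_pos (gaussT_iter_mem hxI (2*n))
        have h := phi_diff_le a (2*n) t _ ht.2.1.le hm.1.le
        rw [e2] at h
        rw [Metric.mem_closedBall, Real.dist_eq]
        refine h.trans ?_
        gcongr
        rw [abs_le]; constructor <;> linarith [ht.2.1, ht.2.2]
    have hm := phi_image_measure a (2*n) A' Set.inter_subset_right
    have hvol : volume Bl = ENNReal.ofReal (2 * (1/q^2)) := Real.volume_closedBall _ _
    have hBlm : MeasurableSet Bl := Metric.isClosed_closedBall.measurableSet
    have hadd : volume (A ∩ Bl) + volume (Aᶜ ∩ Bl) = volume Bl := by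
      rw [Set.inter_comm A, Set.inter_comm Aᶜ]
      exact measure_inter_add_sdiff Bl hA
    have hBt : volume Bl ≠ ⊤ := by rw [hvol]; exact ENNReal.ofReal_ne_top
    have h1t : volume (A ∩ Bl) ≠ ⊤ := measure_ne_top_of_subset Set.inter_subset_right hBt
    have h2t : volume (Aᶜ ∩ Bl) ≠ ⊤ := measure_ne_top_of_subset Set.inter_subset_right hBt
    have hm2 : v ≤ 4 * q^2 * (volume (A ∩ Bl)).toReal := by
      have h3 : volume A' ≤ ENNReal.ofReal (4 * q^2) * volume (A ∩ Bl) :=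
        hm.trans (mul_le_mul_right (measure_mono hsub) _)
      have := ENNReal.toReal_mono (ENNReal.mul_ne_top ENNReal.ofReal_ne_top h1t) h3
      rwa [ENNReal.toReal_mul, ENNReal.toReal_ofReal (by positivity)] at this
    have hadd2 : (volume (A ∩ Bl)).toReal + (volume (Aᶜ ∩ Bl)).toReal = 2 * (1/q^2) := by
      rw [← ENNReal.toReal_add h1t h2t, hadd, hvol, ENNReal.toReal_ofReal (by positivity)]
    have hpB : (0:ℝ) < 2 * (1/q^2) := by positivity
    rw [hvol, ← ENNReal.ofReal_toReal h2t, ← ENNReal.ofReal_div_of_pos hpB]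
    apply ENNReal.ofReal_le_ofReal
    rw [div_le_iff₀ hpB]
    set w := (volume (A ∩ Bl)).toReal
    have h5 : v / (4 * q^2) ≤ w := by rw [div_le_iff₀ (by positivity)]; linarith
    have h6 : v/8 * (2 * (1/q^2)) = v / (4*q^2) := by field_simp; norm_num
    linarith
  have := le_of_tendsto' ht hle
  have h3 : ENNReal.ofReal (1 - v/8) < 1 := by
    rw [ENNReal.ofReal_lt_one]; linarith
  exact absurd this (not_le.2 h3)

lemma gauss_ergodic : Ergodic (gaussT^[2]) gaussM := by
  refine ⟨gaussT_mp.iterate 2, ⟨?_⟩⟩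
  intro A hA hinv
  rw [eventuallyConst_set']
  by_cases hpos : volume (A ∩ Set.Ioo 0 1) = 0
  · left
    have : ∀ᵐ x ∂gaussM, x ∉ A := by
      have h1 : ∀ᵐ x : ℝ, x ∉ A ∩ Set.Ioo 0 1 := measure_eq_zero_iff_ae_notMem.1 hpos
      have h2 : ∀ᵐ x ∂gaussM, x ∉ A ∩ Set.Ioo 0 1 := gaussM_ae_iff.2 (ae_restrict_of_ae h1)
      filter_upwards [h2, gaussM_irr] with x hx hi hxA
      exact hx ⟨hxA, Iirr_pos hi⟩
    filter_upwards [this] with x hx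
    exact propext (iff_of_false hx (fun h => h))
  · right
    have h := erg_key A hA hinv hpos
    rw [ae_restrict_iff' hA.compl] at h
    have h2 : ∀ᵐ x ∂gaussM, x ∈ Aᶜ → x ∉ Iirr := gaussM_ae_iff.2 (ae_restrict_of_ae h)
    filter_upwards [h2, gaussM_irr] with x hx hi
    have : x ∈ A := by
      by_contra hc
      exact hx hc hi
    exact propext (iff_of_true this trivial)

/-- auxiliary partial maxima of Birkhoff sums -/
noncomputable def maxF {X : Type*} (T : X → X) (f : X → ℝ) : ℕ → X → ℝ
  | 0, x => f x
  | (n+1), x => f x + max 0 (maxF T f n (T x))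

lemma maxF_mono {X : Type*} (T : X → X) (f : X → ℝ) (n : ℕ) :
    ∀ x, maxF T f n x ≤ maxF T f (n+1) x := by
  induction n with
  | zero => intro x; simp only [maxF]; linarith [le_max_left 0 (f (T x))]
  | succ n ih =>
    intro x
    rw [maxF, maxF]
    have := ih (T x)
    gcongr

lemma maxF_monotone {X : Type*} (T : X → X) (f : X → ℝ) (x : X) :
    Monotone (fun n => maxF T f n x) := monotone_nat_of_le_succ fun n => maxF_mono T f n x

lemma birkhoffSum_le_maxF {X : Type*} (T : X → X) (f : X → ℝ) (n : ℕ) :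
    ∀ x, birkhoffSum T f (n+1) x ≤ maxF T f n x := by
  induction n with
  | zero => intro x; simp [maxF]
  | succ n ih =>
    intro x
    rw [birkhoffSum_succ', maxF]
    have := (ih (T x)).trans (le_max_right 0 _)
    linarith

lemma maxF_measurable {X : Type*} [MeasurableSpace X] (T : X → X) (f : X → ℝ)
    (hT : Measurable T) (hf : Measurable f) (n : ℕ) : Measurable (maxF T f n) := by
  induction n with
  | zero => exact hf
  | succ n ih => exact hf.add (measurable_const.max (ih.comp hT))

lemma maxF_integrable {X : Type*} [MeasurableSpace X] {μ : Measure X} {T : X → X} {f : X → ℝ}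
    (hT : MeasurePreserving T μ μ) (hi : Integrable f μ) (n : ℕ) :
    Integrable (maxF T f n) μ := by
  induction n with
  | zero => exact hi
  | succ n ih =>
    have h1 : Integrable (fun x => maxF T f n (T x)) μ := hT.integrable_comp_of_integrable ih
    have h2 : Integrable (fun x => max 0 (maxF T f n (T x))) μ := by
      simpa [max_comm] using h1.pos_part
    exact hi.add h2

lemma ergodic_bdd {X : Type*} [MeasurableSpace X] {μ : Measure X} [IsProbabilityMeasure μ]
    {T : X → X} {f : X → ℝ} (hT : Ergodic T μ) (hf : Measurable f) (hi : Integrable f μ)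
    (hneg : ∫ x, f x ∂μ < 0) :
    ∀ᵐ x ∂μ, BddAbove (Set.range fun n => birkhoffSum T f n x) := by
  have hmp := hT.toMeasurePreserving
  set A : Set X := {x | BddAbove (Set.range fun n => birkhoffSum T f n x)} with hA
  have hSm : ∀ n, Measurable (fun x => birkhoffSum T f n x) := by
    intro n
    unfold birkhoffSum
    exact Finset.measurable_sum _ fun i _ => hf.comp (hmp.measurable.iterate i)
  have hAm : MeasurableSet A := measurableSet_bddAbove_range hSm
  have hinv : T ⁻¹' A = A := by
    ext x
    simp only [hA, Set.mem_preimage, Set.mem_ofPred_eq]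
    constructor
    · rintro ⟨c, hc⟩
      refine ⟨max 0 (f x + c), ?_⟩
      rintro _ ⟨n, rfl⟩
      rcases n with _ | n
      · simp
      · have := hc ⟨n, rfl⟩
        simp only [birkhoffSum_succ'] at this ⊢
        exact le_max_of_le_right (by linarith)
    · rintro ⟨c, hc⟩
      refine ⟨c - f x, ?_⟩
      rintro _ ⟨n, rfl⟩
      have := hc ⟨n+1, rfl⟩
      simp only [birkhoffSum_succ'] at this ⊢
      linarith
  rcases hT.toPreErgodic.prob_eq_zero_or_one hAm hinv with h0 | h1
  · exfalso
    have hae : ∀ᵐ x ∂μ, x ∉ A := measure_eq_zero_iff_ae_notMem.1 h0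
    have hlim : Tendsto (fun n => ∫ x, (maxF T f (n+1) x - maxF T f n (T x)) ∂μ) atTop
        (nhds (∫ x, f x ∂μ)) := by
      apply tendsto_integral_of_dominated_convergence (fun x => |f x| + |f (T x)|)
      · intro n
        exact ((maxF_measurable T f hmp.measurable hf _).sub
          ((maxF_measurable T f hmp.measurable hf _).comp hmp.measurable)).aestronglyMeasurable
      · exact hi.abs.add (hmp.integrable_comp_of_integrable hi).abs
      · intro n
        filter_upwards with x
        rw [Real.norm_eq_abs, maxF]
        have h2 : f (T x) ≤ maxF T f n (T x) := maxF_monotone T f (T x) (Nat.zero_le n)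
        rcases max_cases 0 (maxF T f n (T x)) with ⟨h, h'⟩ | ⟨h, h'⟩ <;> rw [h]
        · rw [abs_le]
          constructor <;> linarith [abs_nonneg (f (T x)), neg_abs_le (f x), le_abs_self (f x), neg_abs_le (f (T x))]
        · rw [add_sub_cancel_right]; linarith [abs_nonneg (f (T x))]
      · filter_upwards [hae] with x hx
        have hTx : T x ∉ A := by
          intro h; apply hx; rw [← hinv]; exact h
        have : ∃ n, 0 ≤ maxF T f n (T x) := by
          by_contra! hcon
          apply hTx
          refine ⟨0, ?_⟩
          rintro _ ⟨n, rfl⟩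
          rcases n with _ | n
          · simp
          · exact (birkhoffSum_le_maxF T f n (T x)).trans (hcon n).le
        obtain ⟨N, hN⟩ := this
        apply tendsto_const_nhds.congr'
        filter_upwards [eventually_ge_atTop N] with n hn
        have : 0 ≤ maxF T f n (T x) := hN.trans (maxF_monotone T f (T x) hn)
        rw [maxF, max_eq_right this]; ring
    have hge : ∀ n, 0 ≤ ∫ x, (maxF T f (n+1) x - maxF T f n (T x)) ∂μ := by
      intro n
      have i1 := maxF_integrable hmp hi (n+1)
      have i2 := maxF_integrable hmp hi n
      have i3 : Integrable (fun x => maxF T f n (T x)) μ := hmp.integrable_comp_of_integrable i2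
      rw [integral_sub i1 i3]
      have : ∫ x, maxF T f n (T x) ∂μ = ∫ x, maxF T f n x ∂μ := by
        have hm := maxF_measurable T f hmp.measurable hf n
        conv_rhs => rw [← hmp.map_eq]
        rw [integral_map hmp.measurable.aemeasurable hm.aestronglyMeasurable]
      rw [this, sub_nonneg]
      exact integral_mono i2 i1 (maxF_mono T f n)
    linarith [ge_of_tendsto' hlim hge]
  · exact (mem_ae_iff_prob_eq_one hAm).2 h1

/-- first digit as a natural number -/
noncomputable def fdig (x : ℝ) : ℕ := ⌊x⁻¹⌋₊

lemma fdig_measurable : Measurable fdig := Nat.measurable_floor.comp measurable_inv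

/-- Gauss–Kuzmin probabilities -/
noncomputable def gk (j : ℕ) : ℝ := Real.log (1 + 1 / (((j:ℝ)+1) * ((j:ℝ)+3))) / Real.log 2

lemma gk_nonneg (j : ℕ) : 0 ≤ gk j := by
  have h2 := log2_pos
  apply div_nonneg _ h2.le
  apply Real.log_nonneg
  have : 0 ≤ 1 / (((j:ℝ)+1) * ((j:ℝ)+3)) := by positivity
  linarith

lemma gk_pos (j : ℕ) : 0 < gk j := by
  have h2 := log2_pos
  apply div_pos _ h2
  apply Real.log_pos
  have : 0 < 1 / (((j:ℝ)+1) * ((j:ℝ)+3)) := by positivity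
  linarith

lemma lg_nonneg (j k : ℕ) : 0 ≤ Real.log ((j:ℝ)+1+(k:ℝ)) := by
  apply Real.log_nonneg
  have h1 : (0:ℝ) ≤ j := Nat.cast_nonneg j
  have h2 : (0:ℝ) ≤ k := Nat.cast_nonneg k
  linarith

lemma gk_le (j : ℕ) : gk j ≤ (1 / Real.log 2) * (1 / ((j:ℝ)+1)^2) := by
  have h2 := log2_pos
  unfold gk
  rw [div_eq_mul_one_div, mul_comm]
  gcongr
  refine (Real.log_le_sub_one_of_pos (by positivity)).trans ?_
  rw [add_sub_cancel_left]
  apply one_div_le_one_div_of_le (by positivity)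
  nlinarith [(Nat.cast_nonneg j : (0:ℝ) ≤ j)]

lemma gk_summable (k : ℕ) : Summable (fun j : ℕ => gk j * Real.log ((j:ℝ)+1+(k:ℝ))) := by
  have h2 := log2_pos
  have hs : Summable (fun j : ℕ => 1 / ((j+1 : ℕ) : ℝ) ^ (3/2 : ℝ)) :=
    (summable_nat_add_iff 1).2 (Real.summable_one_div_nat_rpow.2 (by norm_num))
  refine Summable.of_nonneg_of_le (fun j => mul_nonneg (gk_nonneg j) (lg_nonneg j k)) (fun j => ?_)
    (hs.mul_left ((1 / Real.log 2) * (2 * ((k:ℝ)+1)^(1/2:ℝ))))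
  have hj : (0:ℝ) ≤ j := Nat.cast_nonneg j
  have hk : (0:ℝ) ≤ k := Nat.cast_nonneg k
  have hl : Real.log ((j:ℝ)+1+(k:ℝ)) ≤ 2 * ((k:ℝ)+1)^(1/2:ℝ) * ((j:ℝ)+1)^(1/2:ℝ) := by
    have h3 : Real.log ((j:ℝ)+1+(k:ℝ)) ≤ Real.log (((k:ℝ)+1)*((j:ℝ)+1)) := by
      apply Real.log_le_log (by positivity); nlinarith
    have h4 := Real.log_le_rpow_div (x := ((k:ℝ)+1)*((j:ℝ)+1)) (by positivity) (ε := 1/2) (by norm_num)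
    rw [Real.mul_rpow (by positivity) (by positivity)] at h4
    linarith
  have h5 := mul_le_mul (gk_le j) hl (lg_nonneg j k) (by positivity)
  refine h5.trans (le_of_eq ?_)
  have h6 : 1 / ((j+1 : ℕ) : ℝ) ^ (3/2 : ℝ) = 1 / ((j:ℝ)+1)^2 * ((j:ℝ)+1)^(1/2:ℝ) := by
    push_cast
    have hp : (0:ℝ) < (j:ℝ)+1 := by positivity
    rw [one_div, ← Real.rpow_neg hp.le, one_div, ← Real.rpow_natCast, ← Real.rpow_neg hp.le, ← Real.rpow_add hp]
    norm_num
  rw [h6]; ring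

lemma log_Kconst (k : ℕ) : Real.log (Kconst k) = ∑' j : ℕ, gk j * Real.log ((j:ℝ)+1+(k:ℝ)) := by
  have hp : ∀ j : ℕ, (0:ℝ) < 1 + 1 / (((j:ℝ)+1) * ((j:ℝ)+3)) := fun j => by positivity
  have e : ∀ j : ℕ, Real.log ((1 + 1 / (((j:ℝ)+1) * ((j:ℝ)+3))) ^ (Real.log ((j:ℝ)+1+(k:ℝ)) / Real.log 2))
      = gk j * Real.log ((j:ℝ)+1+(k:ℝ)) := by
    intro j
    rw [Real.log_rpow (hp j), gk]; ring
  unfold Kconst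
  rw [← Real.rexp_tsum_eq_tprod (fun j => Real.rpow_pos_of_pos (hp j) _), Real.log_exp]
  · exact tsum_congr e
  · simp only [e]; exact gk_summable k

lemma log_K0_pos : 0 < Real.log (Kconst 0) := by
  rw [log_Kconst]
  refine (gk_summable 0).tsum_pos (fun j => mul_nonneg (gk_nonneg j) (lg_nonneg j 0)) 1 ?_
  apply mul_pos (gk_pos 1)
  apply Real.log_pos; norm_num

lemma log_K0_le : Real.log (Kconst 0) ≤ Real.log (Kconst 1) := by
  rw [log_Kconst, log_Kconst]
  refine (gk_summable 0).tsum_le_tsum (fun j => ?_) (gk_summable 1)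
  apply mul_le_mul_of_nonneg_left _ (gk_nonneg j)
  apply Real.log_le_log <;> push_cast
  · positivity
  · linarith

lemma fdig_law (j : ℕ) : (gaussM.map fdig).real {j+1} = gk j := by
  rw [measureReal_def, Measure.map_apply fdig_measurable (measurableSet_singleton _), ← gaussM_inter]
  have hj : (0:ℝ) ≤ j := Nat.cast_nonneg j
  have e : fdig ⁻¹' {j+1} ∩ Set.Ioc 0 1 = Set.Ioc (1/((j:ℝ)+2)) (1/((j:ℝ)+1)) := by
    ext x
    simp only [Set.mem_inter_iff, Set.mem_preimage, Set.mem_singleton_iff, Set.mem_Ioc, fdig]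
    constructor
    · rintro ⟨h, h0, h1⟩
      rw [Nat.floor_eq_iff (inv_pos.2 h0).le] at h
      push_cast at h
      constructor
      · rw [one_div_lt (by linarith) h0, one_div]; linarith
      · rw [le_one_div h0 (by linarith), one_div]; linarith
    · rintro ⟨h1, h2⟩
      have h0 : 0 < x := lt_trans (by positivity) h1
      refine ⟨?_, h0, h2.trans ?_⟩
      · rw [one_div_lt (by linarith) h0, one_div] at h1
        rw [le_one_div h0 (by linarith), one_div] at h2
        rw [Nat.floor_eq_iff (inv_pos.2 h0).le]
        push_cast
        constructor <;> linarith
      · rw [div_le_one (by positivity)]; linarith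
  have hle : 1/((j:ℝ)+2) ≤ 1/((j:ℝ)+1) := one_div_le_one_div_of_le (by positivity) (by linarith)
  rw [e, gaussM_Ioc _ _ (by positivity) hle (by rw [div_le_one (by positivity)]; linarith)]
  have h2 := log2_pos
  rw [ENNReal.toReal_ofReal]
  · rw [gk]
    congr 1
    rw [← Real.log_div (by positivity) (by positivity)]
    congr 1
    field_simp
    ring
  · apply div_nonneg _ h2.le
    rw [sub_nonneg]
    apply Real.log_le_log (by positivity)
    linarith

lemma fdig_law_zero : (gaussM.map fdig).real {0} = 0 := by
  rw [measureReal_def, Measure.map_apply fdig_measurable (measurableSet_singleton _), ← gaussM_inter]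
  have e : fdig ⁻¹' {0} ∩ Set.Ioc 0 1 = ∅ := by
    ext x
    simp only [Set.mem_inter_iff, Set.mem_preimage, Set.mem_singleton_iff, Set.mem_Ioc, fdig, Set.mem_empty_iff_false, iff_false]
    rintro ⟨h, h0, h1⟩
    have : 0 < ⌊x⁻¹⌋₊ := Nat.floor_pos.2 (one_le_inv_iff₀.2 ⟨h0, h1⟩)
    omega
  rw [e]; simp

lemma fdig_integral (k : ℕ) : Integrable (fun x => Real.log ((fdig x : ℝ) + k)) gaussM ∧
    ∫ x, Real.log ((fdig x : ℝ) + k) ∂gaussM = Real.log (Kconst k) := by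
  set ν := gaussM.map fdig with hν
  have : IsProbabilityMeasure ν := Measure.isProbabilityMeasure_map fdig_measurable.aemeasurable
  set g : ℕ → ℝ := fun m => Real.log ((m:ℝ) + k) with hg
  have hgm : Measurable g := measurable_from_top
  have hsum : Summable (fun m => ν.real {m} * g m) := by
    rw [← summable_nat_add_iff 1]
    refine (gk_summable k).congr fun j => ?_
    rw [fdig_law, hg]; push_cast; rfl
  have hi : Integrable g ν := by
    rw [← Measure.sum_smul_dirac ν]
    apply integrable_sum_dirac (fun i => measure_ne_top _ _)
    refine hsum.norm.congr fun m => ?_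
    rw [norm_mul, Real.norm_of_nonneg measureReal_nonneg]; rfl
  constructor
  · exact (integrable_map_measure hgm.aestronglyMeasurable fdig_measurable.aemeasurable).1 hi
  · have h1 : ∫ x, g (fdig x) ∂gaussM = ∫ m, g m ∂ν :=
      (integral_map fdig_measurable.aemeasurable hgm.aestronglyMeasurable).symm
    have h2 : ∫ x, g (fdig x) ∂gaussM = Real.log (Kconst k) := by
      rw [h1, integral_countable hi, log_Kconst]
      simp only [smul_eq_mul]
      rw [hsum.tsum_eq_zero_add, fdig_law_zero, zero_mul, zero_add]
      refine tsum_congr fun j => ?_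
      rw [fdig_law, hg]; push_cast; rfl
    exact h2

lemma birk_upper (ε : ℝ) (hε : 0 < ε) : ∀ᵐ x ∂gaussM, ∃ c, ∀ m : ℕ,
    ∑ j ∈ range m, Real.log ((fdig (gaussT^[2*j] x) : ℝ) + 1) ≤ m * (Real.log (Kconst 1) + ε) + c := by
  obtain ⟨hi, he⟩ := fdig_integral 1
  have hm : Measurable (fun x => Real.log ((fdig x : ℝ) + (1:ℕ)) - (Real.log (Kconst 1) + ε)) := by
    have := (measurable_from_top (f := fun m : ℕ => Real.log ((m : ℝ) + (1:ℕ)))).comp fdig_measurable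
    exact this.sub_const _
  have hb := ergodic_bdd gauss_ergodic hm (hi.sub (integrable_const _)) (by
    rw [integral_sub hi (integrable_const _), he]; simp [hε])
  filter_upwards [hb] with x hx
  obtain ⟨c, hc⟩ := hx
  refine ⟨c, fun m => ?_⟩
  have := hc ⟨m, rfl⟩
  simp only [birkhoffSum, sum_sub_distrib, sum_const, card_range, nsmul_eq_mul, ← Function.iterate_mul,
    Nat.cast_one] at this
  linarith

lemma birk_lower (ε : ℝ) (hε : 0 < ε) : ∀ᵐ x ∂gaussM, ∃ c, ∀ m : ℕ,
    m * (Real.log (Kconst 0) - ε) - c ≤ ∑ j ∈ range m, Real.log (fdig (gaussT^[2*j] x) : ℝ) := by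
  obtain ⟨hi, he⟩ := fdig_integral 0
  have hm : Measurable (fun x => (Real.log (Kconst 0) - ε) - Real.log ((fdig x : ℝ) + (0:ℕ))) := by
    have := (measurable_from_top (f := fun m : ℕ => Real.log ((m : ℝ) + (0:ℕ)))).comp fdig_measurable
    exact this.const_sub _
  have hb := ergodic_bdd gauss_ergodic hm ((integrable_const _).sub hi) (by
    rw [integral_sub (integrable_const _) hi, he]; simp [hε])
  filter_upwards [hb] with x hx
  obtain ⟨c, hc⟩ := hx
  refine ⟨c, fun m => ?_⟩
  have := hc ⟨m, rfl⟩
  simp only [birkhoffSum, sum_sub_distrib, sum_const, card_range, nsmul_eq_mul, ← Function.iterate_mul,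
    Nat.cast_zero, add_zero] at this
  linarith

/-- sequences obeying the (one-sided) laws of large numbers -/
def GoodSeq (u : ℕ → ℕ+) : Prop := ∀ ε > 0, ∃ c : ℝ, ∀ m : ℕ,
  ∑ j ∈ range m, Real.log ((u j : ℝ) + 1) ≤ m * (Real.log (Kconst 1) + ε) + c ∧
  m * (Real.log (Kconst 0) - ε) - c ≤ ∑ j ∈ range m, Real.log (u j : ℝ)

lemma good_ae_even : ∀ᵐ x ∂gaussM, GoodSeq (fun j => dig x (2*j)) := by
  have h1 : ∀ᵐ x ∂gaussM, ∀ n : ℕ, ∃ c, ∀ m : ℕ,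
    ∑ j ∈ range m, Real.log ((fdig (gaussT^[2*j] x) : ℝ) + 1) ≤ m * (Real.log (Kconst 1) + 1/((n:ℝ)+1)) + c :=
    ae_all_iff.2 fun n => birk_upper _ (by positivity)
  have h2 : ∀ᵐ x ∂gaussM, ∀ n : ℕ, ∃ c, ∀ m : ℕ,
    m * (Real.log (Kconst 0) - 1/((n:ℝ)+1)) - c ≤ ∑ j ∈ range m, Real.log (fdig (gaussT^[2*j] x) : ℝ) :=
    ae_all_iff.2 fun n => birk_lower _ (by positivity)
  filter_upwards [h1, h2, gaussM_irr] with x h1 h2 hx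
  intro ε hε
  obtain ⟨n, hn⟩ := exists_nat_one_div_lt hε
  obtain ⟨c1, h1⟩ := h1 n
  obtain ⟨c2, h2⟩ := h2 n
  refine ⟨max c1 c2, fun m => ?_⟩
  simp only [dig_val hx]
  have h1 := h1 m
  have h2 := h2 m
  simp only [fdig] at h1 h2
  have hm : (m:ℝ) * (1/((n:ℝ)+1)) ≤ m * ε := by gcongr
  have e1 := le_max_left c1 c2
  have e2 := le_max_right c1 c2
  constructor
  · nlinarith
  · nlinarith

lemma good_ae : ∀ᵐ x ∂gaussM, GoodSeq (fun j => dig x (2*j)) ∧ GoodSeq (fun j => dig x (2*j+1)) := by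
  have h0 : ∀ P : ℝ → Prop, (∀ᵐ x ∂gaussM, P x) → ∀ᵐ x ∂gaussM, P (gaussT x) :=
    fun P hP => gaussT_mp.quasiMeasurePreserving.ae hP
  have h2 := h0 (fun x => GoodSeq (fun j => dig x (2*j))) good_ae_even
  filter_upwards [good_ae_even, h2] with x h1 h2
  refine ⟨h1, ?_⟩
  have : (fun j => dig x (2*j+1)) = (fun j => dig (gaussT x) (2*j)) := by
    funext j
    simp only [dig, Function.iterate_succ_apply]
  rw [this]; exact h2

lemma sum_even_odd (u : ℕ → ℝ) (m : ℕ) :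
    ∑ i ∈ range (2*m), u i = ∑ j ∈ range m, u (2*j) + ∑ j ∈ range m, u (2*j+1) := by
  induction m with
  | zero => simp
  | succ m ih =>
    rw [show 2*(m+1) = 2*m+1+1 by ring, sum_range_succ, sum_range_succ, ih, sum_range_succ, sum_range_succ]
    ring

lemma prod_exp (u : ℕ → ℝ) (hu : ∀ i, 0 < u i) (n : ℕ) :
    (∏ i ∈ range n, u i)⁻¹ ^ 2 = Real.exp (-2 * ∑ i ∈ range n, Real.log (u i)) := by
  rw [← Real.log_prod (fun i _ => (hu i).ne'), mul_comm, Real.exp_mul,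
    Real.exp_log (prod_pos fun i _ => hu i), Real.rpow_neg (prod_pos fun i _ => hu i).le, inv_pow]
  norm_num

lemma holder_lower (x : ℝ) (hx : x ∈ Iirr) (e : ℕ) (he : e ≤ 1)
    (hE : GoodSeq (fun j => coeff x (2*j))) (hO : GoodSeq (fun j => coeff x (2*j+1)))
    (hG : GoodSeq (fun j => coeff x (2*j+e))) (α : ℝ) (hα : 0 ≤ α)
    (hα2 : α < Real.log (Kconst 0) / (2 * Real.log (Kconst 1))) :
    memHolder (fun y => cfVal (fun j => coeff y (2*j+e))) Iirr x α := by
  have hL0 := log_K0_pos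
  have hL1 := log_K0_le
  set L0 := Real.log (Kconst 0)
  set L1 := Real.log (Kconst 1)
  set a := coeff x with ha
  rw [lt_div_iff₀ (by linarith)] at hα2
  set ε := (L0 - 2*α*L1) / (2*α+1) with hε
  have hε0 : 0 < ε := div_pos (by linarith) (by linarith)
  have hεe : 2*α*(L1+ε) = L0 - ε := by
    have : ε * (2*α+1) = L0 - 2*α*L1 := by rw [hε]; field_simp
    linarith
  obtain ⟨cE, hE⟩ := hE ε hε0
  obtain ⟨cO, hO⟩ := hO ε hε0
  obtain ⟨c, hG⟩ := hG ε hε0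
  refine ⟨(16:ℝ)^α * Real.exp (α * (8 * (L1+ε) + 2*(cE+cO)) + 2*c), by positivity, ?_⟩
  intro y hy
  by_cases hxy : x = y
  · subst hxy
    simp only [sub_self, abs_zero]
    have : (0:ℝ) ≤ 0 ^ α := Real.rpow_nonneg le_rfl _
    positivity
  set b := coeff y with hb
  have hxa : cfVal a = x := cfVal_coeff hx
  have hyb : cfVal b = y := cfVal_coeff hy
  have hex : ∃ n, a n ≠ b n := by
    by_contra! hcon
    exact hxy (by rw [← hxa, ← hyb, funext hcon])
  classical
  set n := Nat.find hex with hn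
  have hn1 : a n ≠ b n := Nat.find_spec hex
  have hn2 : ∀ i < n, a i = b i := fun i hi => by
    have := Nat.find_min hex hi
    push Not at this
    exact this
  set m := n/2 with hm
  have hpos : ∀ i, (0:ℝ) < a i := fun i => by exact_mod_cast (a i).pos
  have hpos1 : ∀ i, (0:ℝ) < (a i : ℝ) + 1 := fun i => by linarith [hpos i]
  have hclose := cfVal_close (fun j => a (2*j+e)) (fun j => b (2*j+e)) m
    (fun i hi => hn2 _ (by omega))
  rw [prod_exp _ (fun i => hpos _)] at hclose
  have hsep := cfVal_sep a b n hn2 hn1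
  rw [prod_exp _ hpos1, hxa, hyb] at hsep
  refine hclose.trans ?_
  have hS : ∑ i ∈ range (n+3), Real.log ((a i : ℝ)+1) ≤ ∑ i ∈ range (2*(m+2)), Real.log ((a i : ℝ)+1) := by
    apply sum_le_sum_of_subset_of_nonneg
    · intro i hi; rw [Finset.mem_range] at *; omega
    · intro i _ _; exact Real.log_nonneg (by linarith [hpos i])
  rw [sum_even_odd] at hS
  have h1 := (hE (m+2)).1
  have h2 := (hO (m+2)).1
  have h3 := (hG m).2
  push_cast at h1 h2
  have hlow : (1/16) * Real.exp (-2 * (2*((m:ℝ)+2)*(L1+ε) + cE + cO)) ≤ |x - y| := by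
    refine le_trans ?_ hsep
    gcongr (1/16) * Real.exp ?_
    linarith
  have hpow : ((16:ℝ)^α)⁻¹ * Real.exp (-2 * (2*((m:ℝ)+2)*(L1+ε) + cE + cO) * α) ≤ |x - y| ^ α := by
    refine le_trans (le_of_eq ?_) (Real.rpow_le_rpow (by positivity) hlow hα)
    rw [Real.mul_rpow (by positivity) (by positivity), ← Real.exp_mul, one_div, Real.inv_rpow (by norm_num)]
  refine le_trans ?_ (mul_le_mul_of_nonneg_left hpow (by positivity))
  have h16 : (0:ℝ) < (16:ℝ)^α := by positivity
  rw [show (16:ℝ)^α * Real.exp (α * (8 * (L1+ε) + 2*(cE+cO)) + 2*c) *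
    (((16:ℝ)^α)⁻¹ * Real.exp (-2 * (2*((m:ℝ)+2)*(L1+ε) + cE + cO) * α)) =
    Real.exp (α * (8 * (L1+ε) + 2*(cE+cO)) + 2*c) * Real.exp (-2 * (2*((m:ℝ)+2)*(L1+ε) + cE + cO) * α) by
      field_simp]
  rw [← Real.exp_add]
  apply Real.exp_le_exp.2
  have h4 : α * (8 * (L1+ε) + 2*(cE+cO)) + 2*c + -2 * (2*((m:ℝ)+2)*(L1+ε) + cE + cO) * α
      = 2*c - 2*m*(2*α*(L1+ε)) := by ring
  rw [h4, hεe]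
  linarith

lemma holder_upper (x : ℝ) (hx : x ∈ Iirr) (e : ℕ)
    (hE : GoodSeq (fun j => coeff x (2*j))) (hO : GoodSeq (fun j => coeff x (2*j+1)))
    (hG : GoodSeq (fun j => coeff x (2*j+e))) (α : ℝ)
    (hmem : memHolder (fun y => cfVal (fun j => coeff y (2*j+e))) Iirr x α) :
    α ≤ Real.log (Kconst 1) / (2 * Real.log (Kconst 0)) := by
  have hL0 := log_K0_pos
  have hL1 := log_K0_le
  set L0 := Real.log (Kconst 0)
  set L1 := Real.log (Kconst 1)
  set a := coeff x with ha
  by_contra! hcon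
  have hα : 0 < α := lt_trans (by apply div_pos <;> linarith) hcon
  rw [div_lt_iff₀ (by linarith)] at hcon
  set ε := (2*α*L0 - L1) / (2*(2*α+1)) with hε
  have hε0 : 0 < ε := div_pos (by linarith) (by linarith)
  set δ := (2*α*L0 - L1)/2 with hδ
  have hδ0 : 0 < δ := by rw [hδ]; linarith
  have hεe : 2*α*(L0-ε) - (L1+ε) = δ := by
    have : ε * (2*α+1) = δ := by rw [hε, hδ]; field_simp
    linarith
  obtain ⟨cE, hE⟩ := hE ε hε0
  obtain ⟨cO, hO⟩ := hO ε hε0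
  obtain ⟨c, hG⟩ := hG ε hε0
  obtain ⟨C, hC, hmem⟩ := hmem
  have hxa : cfVal a = x := cfVal_coeff hx
  have hpos : ∀ i, (0:ℝ) < a i := fun i => by exact_mod_cast (a i).pos
  have hpos1 : ∀ i, (0:ℝ) < (a i : ℝ) + 1 := fun i => by linarith [hpos i]
  have key : ∀ m : ℕ, (m:ℝ) * (2*δ) ≤ Real.log C + Real.log 16 + 6*(L1+ε) + 2*c + 2*α*(cE+cO) := by
    intro m
    set b := Function.update a (2*m+e) (a (2*m+e) + 1) with hb
    have hne : ∀ i, i ≠ 2*m+e → a i = b i := fun i hi => by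
      rw [hb, Function.update_of_ne hi]
    have hne2 : a (2*m+e) ≠ b (2*m+e) := by
      rw [hb, Function.update_self]
      intro h
      have := congrArg PNat.val h
      simp at this
    have hm := hmem (cfVal b) (cfVal_mem b)
    simp only [coeff_cfVal] at hm
    rw [← ha] at hm
    have hclose := cfVal_close a b (2*m) (fun i hi => hne i (by omega))
    rw [prod_exp _ hpos, hxa] at hclose
    have hsep := cfVal_sep (fun j => a (2*j+e)) (fun j => b (2*j+e)) m
      (fun i hi => hne _ (by omega)) hne2
    rw [prod_exp _ (fun i => hpos1 _)] at hsep
    rw [sum_even_odd] at hclose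
    have h1 := (hE m).2
    have h2 := (hO m).2
    have h3 := (hG (m+3)).1
    push_cast at h3
    have hup : |x - cfVal b| ≤ Real.exp (-2 * (2*m*(L0-ε) - cE - cO)) := by
      refine hclose.trans (Real.exp_le_exp.2 ?_)
      linarith
    have hpow : |x - cfVal b|^α ≤ Real.exp (-2 * (2*m*(L0-ε) - cE - cO) * α) := by
      rw [Real.exp_mul]
      exact Real.rpow_le_rpow (abs_nonneg _) hup hα.le
    have hlow : (1/16) * Real.exp (-2 * ((m+3)*(L1+ε) + c)) ≤ C * Real.exp (-2 * (2*m*(L0-ε) - cE - cO) * α) := by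
      calc (1/16) * Real.exp (-2 * ((m+3)*(L1+ε) + c)) ≤ _ := by
            refine mul_le_mul_of_nonneg_left (Real.exp_le_exp.2 ?_) (by norm_num : (0:ℝ) ≤ 1/16)
            linarith
        _ ≤ _ := hsep
        _ ≤ _ := hm
        _ ≤ _ := by gcongr
    have hlog := Real.log_le_log (by positivity) hlow
    rw [Real.log_mul (by norm_num) (Real.exp_pos _).ne', Real.log_mul hC.ne' (Real.exp_pos _).ne',
      Real.log_exp, Real.log_exp, one_div, Real.log_inv] at hlog
    have h4 : (m:ℝ) * (2*δ) = 2 * (2*m*(L0-ε)) * α - 2 * (m * (L1+ε)) := by rw [← hεe]; ring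
    rw [h4]
    linarith
  obtain ⟨m, hm⟩ := exists_nat_gt ((Real.log C + Real.log 16 + 6*(L1+ε) + 2*c + 2*α*(cE+cO)) / (2*δ))
  rw [div_lt_iff₀ (by linarith)] at hm
  linarith [key m]

lemma holder_final (x : ℝ) (hx : x ∈ Iirr) (e : ℕ) (he : e ≤ 1)
    (hE : GoodSeq (fun j => coeff x (2*j))) (hO : GoodSeq (fun j => coeff x (2*j+1)))
    (hG : GoodSeq (fun j => coeff x (2*j+e))) :
    holderExp (fun y => cfVal (fun j => coeff y (2*j+e))) Iirr x ∈
      Set.Icc (Real.log (Kconst 0) / (2 * Real.log (Kconst 1)))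
          (Real.log (Kconst 1) / (2 * Real.log (Kconst 0))) := by
  have hL0 := log_K0_pos
  have hL1 := log_K0_le
  have hlo := holder_lower x hx e he hE hO hG
  have hup := holder_upper x hx e hE hO hG
  have hLpos : 0 < Real.log (Kconst 0) / (2 * Real.log (Kconst 1)) := by apply div_pos <;> linarith
  have hL1' : Real.log (Kconst 0) / (2 * Real.log (Kconst 1)) ≤ 1 := by
    rw [div_le_one (by linarith)]; linarith
  unfold holderExp
  set S := {α : ℝ | α ∈ Set.Icc (0:ℝ) 1 ∧ memHolder (fun y => cfVal (fun j => coeff y (2*j+e))) Iirr x α} with hS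
  have h0 : (0:ℝ) ∈ S := ⟨⟨le_rfl, zero_le_one⟩, hlo 0 le_rfl hLpos⟩
  have hbdd : BddAbove S := ⟨1, fun α h => h.1.2⟩
  constructor
  · by_contra! hcon
    have hs0 : 0 ≤ sSup S := le_csSup hbdd h0
    set L := Real.log (Kconst 0) / (2 * Real.log (Kconst 1))
    have : (sSup S + L)/2 ∈ S := ⟨⟨by linarith, by linarith⟩, hlo _ (by linarith) (by linarith)⟩
    have := le_csSup hbdd this
    linarith
  · exact csSup_le ⟨0, h0⟩ fun α h => hup α h.2

/-- For Lebesgue-almost every `x ∈ I`, the pointwise Hölder exponents of both components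
of Cantor's bijection lie in `[log K₀ / (2 log K₁), log K₁ / (2 log K₀)]`. -/
theorem holderExp_cantor_ae :
    ∀ᵐ x : ℝ, x ∈ Iirr →
      holderExp cantorF1 Iirr x ∈
        Set.Icc (Real.log (Kconst 0) / (2 * Real.log (Kconst 1)))
          (Real.log (Kconst 1) / (2 * Real.log (Kconst 0))) ∧
      holderExp cantorF2 Iirr x ∈
        Set.Icc (Real.log (Kconst 0) / (2 * Real.log (Kconst 1)))
          (Real.log (Kconst 1) / (2 * Real.log (Kconst 0))) := by
  have h := gaussM_ae_iff.1 good_ae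
  rw [ae_restrict_iff' measurableSet_Ioc] at h
  filter_upwards [h] with x hx hI
  have hp := Iirr_pos hI
  obtain ⟨hE, hO⟩ := hx ⟨hp.1, hp.2.le⟩
  rw [← coeff_eq_dig hI] at hE hO
  exact ⟨holder_final x hI 0 (by norm_num) hE hO hE, holder_final x hI 1 le_rfl hE hO hO⟩
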